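/- arXiv:1409.4379 — 2 statements merged into one kernel-verified Lean document; each statement's English description precedes it below -/
import Mathlib

section
/- Let N ≥ 3 be an integer and let K ⊆ {0, 1, …, ⌊N/2⌋}. Suppose there exists a finite family of real-valued functions h_i on the vertex angles {θ_1, …, θ_N} of the regular N-gon, each of the form h_i(θ) = Σ_{k∈K} (a_{ik} cos(kθ) + b_{ik} sin(kθ)) with real coefficients a_{ik}, b_{ik}, such that cos(π/N) − cos(θ_j) = Σ_i h_i(θ_j)² for all j = 1, …, N. Then |K| ≥ ln(N/2)/2. -/
open Real Finset

/-!
The certificate is refuted by a linear functional that is negative on `cos (π / N) - cos θ` but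
nonnegative on all squares. The functional sums over the vertices against the Dirichlet kernel
`∑_{|p| ≤ g} cos (p θ)`. Up to the factor `N` it picks out the frequencies within `g` of `0`, minus
those within `g` of `N`, since `cos (N θ) = -1` at the vertices.

On a square the functional is a quadratic form whose `(k, l)` entry depends on whether `|k - l|`,
`k + l` and `N - (k + l)` are at most `g`. Suppose that `{0, N / 2} ∪ K` splits into clusters of
diameter at most `γ` that are more than `2 γ` apart, and let `g = ⌊2 γ⌋`. Then the first condition
says that `k` and `l` share a cluster, the other two that both lie in the cluster of `0`
or of `N / 2`. So the form consists of the squared cluster sums, plus or minus those of two of the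
clusters, and is nonnegative.

A suitable `γ` is found by merging clusters that are too close to each other. A merge at most
quadruples the diameter, so `0` and `N / 2` still lie in different clusters at the end if
`N / 2 > 4 ^ |K|`.
-/

/-! ### Separated clusterings -/

lemma card_image_update_comp_lt {α κ : Type*} [DecidableEq κ] {P : Finset α} {f : α → κ} {x y : α}
    (hx : x ∈ P) (hy : y ∈ P) (hne : f x ≠ f y) :
    #(P.image (Function.update id (f y) (f x) ∘ f)) < #(P.image f) := by
  have himage : P.image (Function.update id (f y) (f x) ∘ f) ⊆ (P.image f).erase (f y) := by
    intro c hc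
    obtain ⟨z, hz, rfl⟩ := mem_image.mp hc
    by_cases hzy : f z = f y
    · simpa [hzy, hne] using ⟨x, hx, rfl⟩
    · simpa [hzy] using ⟨z, hz, rfl⟩
  exact (card_le_card himage).trans_lt (card_erase_lt_of_mem (mem_image_of_mem f hy))

section Clustering

variable {α κ : Type*} [PseudoMetricSpace α]

/-- Clusters as the fibres of a labelling `f` of the points of `P`: points with the same label are
at distance at most `δ`. -/
def ClusterDiamLE (P : Finset α) (f : α → κ) (δ : ℝ) : Prop :=
  ∀ x ∈ P, ∀ y ∈ P, f x = f y → dist x y ≤ δ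

/-- The clusters of `P`, given as the fibres of the labelling `f`, have diameter at most `γ` and are
at distance more than `2 * γ` from each other. -/
structure IsSeparatedClustering (P : Finset α) (f : α → κ) (γ : ℝ) : Prop where
  dist_le : ClusterDiamLE P f γ
  lt_dist : ∀ x ∈ P, ∀ y ∈ P, f x ≠ f y → 2 * γ < dist x y

variable {P : Finset α} {f : α → κ} {γ δ : ℝ} {x y z : α}

lemma IsSeparatedClustering.dist_le_two_mul_iff (hf : IsSeparatedClustering P f γ)
    (hγ : 0 ≤ γ) (hx : x ∈ P) (hy : y ∈ P) : dist x y ≤ 2 * γ ↔ f x = f y := by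
  refine ⟨fun h ↦ ?_, fun h ↦ by linarith [hf.dist_le x hx y hy h]⟩
  by_contra hne
  exact (hf.lt_dist x hx y hy hne).not_ge h

lemma IsSeparatedClustering.dist_add_dist_le_two_mul_iff (hf : IsSeparatedClustering P f γ)
    (hγ : 0 ≤ γ) (hx : x ∈ P) (hy : y ∈ P) (hz : z ∈ P) :
    dist x z + dist y z ≤ 2 * γ ↔ f x = f z ∧ f y = f z := by
  constructor
  · intro h
    rw [← hf.dist_le_two_mul_iff hγ hx hz, ← hf.dist_le_two_mul_iff hγ hy hz]
    constructor <;> linarith [dist_nonneg (x := x) (y := z), dist_nonneg (x := y) (y := z)]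
  · rintro ⟨hxz, hyz⟩
    linarith [hf.dist_le x hx z hz hxz, hf.dist_le y hy z hz hyz]

variable [DecidableEq κ]

lemma ClusterDiamLE.update_comp (hf : ClusterDiamLE P f δ) (hx : x ∈ P) (hy : y ∈ P)
    (hxy : dist x y ≤ 2 * γ) :
    ClusterDiamLE P (Function.update id (f y) (f x) ∘ f) (2 * δ + 2 * γ) := by
  have hδ : 0 ≤ δ := dist_nonneg.trans (hf x hx x hx rfl)
  have hγ : 0 ≤ 2 * γ := dist_nonneg.trans hxy
  have hcross : ∀ u ∈ P, ∀ v ∈ P, f u = f x → f v = f y → dist u v ≤ 2 * δ + 2 * γ := by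
    intro u hu v hv hux hvy
    linarith [dist_triangle4 u x y v, hf u hu x hx hux, hf y hy v hv hvy.symm]
  intro u hu v hv huv
  simp only [Function.comp_apply, Function.update_apply, id_eq] at huv
  split_ifs at huv with huy hvy hvy
  · linarith [hf u hu v hv (huy.trans hvy.symm)]
  · rw [dist_comm]
    exact hcross v hv u hu huv.symm huy
  · exact hcross u hu v hv huv hvy
  · linarith [hf u hu v hv huv]

lemma ClusterDiamLE.exists_isSeparatedClustering {n : ℕ} (hγ : 0 ≤ γ) (hf : ClusterDiamLE P f γ)
    (hn : #(P.image f) ≤ n + 1) :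
    ∃ (f' : α → κ) (γ' : ℝ), γ ≤ γ' ∧ γ' ≤ 4 ^ n * γ ∧ IsSeparatedClustering P f' γ' := by
  induction n generalizing f γ with
  | zero =>
    refine ⟨f, γ, le_rfl, by simp, hf, fun x hx y hy hne ↦ absurd ?_ hne⟩
    exact card_le_one.mp hn _ (mem_image_of_mem f hx) _ (mem_image_of_mem f hy)
  | succ n ih =>
    by_cases hsep : ∀ x ∈ P, ∀ y ∈ P, f x ≠ f y → 2 * γ < dist x y
    · exact ⟨f, γ, le_rfl, le_mul_of_one_le_left hγ (one_le_pow₀ (by norm_num)), hf, hsep⟩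
    push Not at hsep
    obtain ⟨x, hx, y, hy, hne, hxy⟩ := hsep
    have hcard := card_image_update_comp_lt hx hy hne
    obtain ⟨f', γ', hle, hle', hf'⟩ :=
      ih (by positivity) (hf.update_comp hx hy hxy) (by omega)
    refine ⟨f', γ', by linarith, hle'.trans_eq (by ring), hf'⟩

/-- The first merge joins two single points, so it only doubles `γ₀`. This improves the factor from
`4 ^ (n + 1)` to `2 * 4 ^ n`. -/
lemma exists_isSeparatedClustering (P : Finset α) {n : ℕ} (hP : #P ≤ n + 2) {γ₀ : ℝ}
    (hγ₀ : 0 ≤ γ₀) :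
    ∃ (f : α → α) (γ : ℝ), γ₀ ≤ γ ∧ γ ≤ 4 ^ n * (2 * γ₀) ∧ IsSeparatedClustering P f γ := by
  classical
  have hid : ClusterDiamLE P id 0 := by
    rintro x - y - rfl
    exact (dist_self _).le
  by_cases hsep : ∀ x ∈ P, ∀ y ∈ P, id x ≠ id y → 2 * γ₀ < dist x y
  · have hpow : (1 : ℝ) ≤ 4 ^ n := one_le_pow₀ (by norm_num)
    exact ⟨id, γ₀, le_rfl, by nlinarith, fun x hx y hy h ↦ (hid x hx y hy h).trans hγ₀, hsep⟩
  push Not at hsep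
  obtain ⟨x, hx, y, hy, hne, hxy⟩ := hsep
  have hcard := card_image_update_comp_lt hx hy hne
  rw [image_id] at hcard
  have hmerged := hid.update_comp hx hy hxy
  rw [mul_zero, zero_add] at hmerged
  obtain ⟨f, γ, hle, hle', hf⟩ :=
    hmerged.exists_isSeparatedClustering (by positivity) (show _ ≤ n + 1 by omega)
  exact ⟨f, γ, by linarith, hle', hf⟩

end Clustering

lemma sq_sum_fiber_le_sum_sum_ite {ι κ R : Type*} [DecidableEq κ] [CommRing R] [LinearOrder R]
    [IsStrictOrderedRing R] (s : Finset ι) (f : ι → κ) (c : κ) (x : ι → R) :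
    (∑ k ∈ s with f k = c, x k) ^ 2 ≤
      ∑ k ∈ s, ∑ l ∈ s, if f k = f l then x k * x l else 0 := by
  have hfibers : ∑ k ∈ s, ∑ l ∈ s, (if f k = f l then x k * x l else 0) =
      ∑ c ∈ s.image f, (∑ k ∈ s with f k = c, x k) ^ 2 := by
    rw [← sum_fiberwise_of_maps_to (fun k ↦ mem_image_of_mem f)]
    refine sum_congr rfl fun c _ ↦ ?_
    rw [sq, sum_mul_sum]
    refine sum_congr rfl fun k hk ↦ ?_
    rw [(mem_filter.mp hk).2, sum_filter]
    simp only [eq_comm]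
  rw [hfibers]
  by_cases hc : c ∈ s.image f
  · exact single_le_sum (f := fun c ↦ (∑ k ∈ s with f k = c, x k) ^ 2)
      (fun _ _ ↦ sq_nonneg _) hc
  · have hempty : s.filter (f · = c) = ∅ :=
      filter_eq_empty_iff.mpr fun k hk hkc ↦ hc (mem_image.mpr ⟨k, hk, hkc⟩)
    rw [hempty, sum_empty, zero_pow two_ne_zero]
    exact sum_nonneg fun _ _ ↦ sq_nonneg _

/-! ### Sums over the vertices -/

/-- The angle of the `j`-th vertex of the regular `N`-gon, for `j = 1, …, N`. -/
noncomputable def vertexAngle (N j : ℕ) : ℝ := (2 * (j : ℝ) - 1) * π / N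

lemma sum_vertexAngle_two_pi_sub (N : ℕ) (F : ℝ → ℝ) :
    ∑ j ∈ Icc 1 N, F (2 * π - vertexAngle N j) = ∑ j ∈ Icc 1 N, F (vertexAngle N j) := by
  refine sum_nbij' (N + 1 - ·) (N + 1 - ·) ?_ ?_ ?_ ?_ fun j hj ↦ ?_
  iterate 4 intro j hj; simp only [mem_Icc] at hj ⊢; omega
  obtain ⟨hj1, hjN⟩ := mem_Icc.mp hj
  have hN : (N : ℝ) ≠ 0 := by norm_cast; omega
  congr 1
  rw [vertexAngle, vertexAngle, Nat.cast_sub (by omega)]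
  push_cast
  field_simp
  ring

lemma two_sin_mul_sum_cos (α : ℝ) (n : ℕ) :
    2 * sin α * ∑ j ∈ Icc 1 n, cos ((2 * (j : ℝ) - 1) * α) = sin (2 * n * α) := by
  induction n with
  | zero => simp
  | succ n ih =>
    have hsub : α - (2 * ((n + 1 : ℕ) : ℝ) - 1) * α = -(2 * n * α) := by push_cast; ring
    have hadd : α + (2 * ((n + 1 : ℕ) : ℝ) - 1) * α = 2 * (n + 1 : ℕ) * α := by ring
    rw [sum_Icc_succ_top (by omega), mul_add, ih, two_mul_sin_mul_cos, hsub, hadd, sin_neg]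
    ring

lemma sum_cos_vertexAngle_of_not_dvd {N : ℕ} {n : ℤ} (hn : ¬ (N : ℤ) ∣ n) :
    ∑ j ∈ Icc 1 N, cos (n * vertexAngle N j) = 0 := by
  rcases eq_or_ne N 0 with rfl | hN
  · simp
  have hN' : (N : ℝ) ≠ 0 := by exact_mod_cast hN
  have hangle (j : ℕ) : n * vertexAngle N j = (2 * (j : ℝ) - 1) * (n * π / N) := by
    rw [vertexAngle]
    ring
  have htelescope := two_sin_mul_sum_cos (n * π / N) N
  have hperiod : 2 * (N : ℝ) * (n * π / N) = (2 * n : ℤ) * π := by push_cast; field_simp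
  rw [hperiod, sin_int_mul_pi] at htelescope
  have hsin : sin (n * π / N) ≠ 0 := by
    intro h
    obtain ⟨q, hq⟩ := sin_eq_zero_iff.mp h
    have hqN : (N : ℝ) * q = n := by
      field_simp at hq
      linarith
    exact hn ⟨q, by exact_mod_cast hqN.symm⟩
  simpa [hangle, hsin] using htelescope

lemma sum_cos_vertexAngle {N : ℕ} {n : ℤ} (hn : -N < n) (hn' : n < 2 * N) :
    ∑ j ∈ Icc 1 N, cos (n * vertexAngle N j) =
      N * ((if n = 0 then 1 else 0) - if n = N then 1 else 0) := by
  have hN : N ≠ 0 := by omega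
  rcases eq_or_ne n 0 with rfl | h0
  · simp [show (0 : ℤ) ≠ N by omega]
  rcases eq_or_ne n N with rfl | hnN
  · have hcos (j : ℕ) : cos (N * vertexAngle N j) = -1 := by
      have hangle : N * vertexAngle N j = j * (2 * π) - π := by
        rw [vertexAngle]
        field_simp
      rw [hangle, cos_nat_mul_two_pi_sub_pi]
    simp [hcos, hN]
  · have hdvd : ¬ (N : ℤ) ∣ n := by
      rintro ⟨q, rfl⟩
      have hq : -1 < q := by nlinarith
      have hq' : q < 2 := by nlinarith
      interval_cases q <;> simp at h0 hnN
    simp [sum_cos_vertexAngle_of_not_dvd hdvd, h0, hnN]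

/-! ### The Dirichlet functional -/

/-- The Dirichlet kernel of order `g`, a sum of cosines over both signs of the frequency. -/
noncomputable def dirichletKernel (g : ℕ) (θ : ℝ) : ℝ :=
  ∑ p ∈ Icc (-g : ℤ) g, cos (p * θ)

lemma dirichletKernel_two_pi_sub (g : ℕ) (θ : ℝ) :
    dirichletKernel g (2 * π - θ) = dirichletKernel g θ := by
  simp only [dirichletKernel, mul_sub, cos_int_mul_two_pi_sub]

lemma sum_Icc_neg_sin_eq_zero (g : ℕ) (θ : ℝ) : ∑ p ∈ Icc (-g : ℤ) g, sin (p * θ) = 0 := by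
  have hodd : ∑ p ∈ Icc (-g : ℤ) g, sin (p * θ) = ∑ p ∈ Icc (-g : ℤ) g, -sin (p * θ) := by
    refine sum_equiv (Equiv.neg ℤ) (fun p ↦ ?_) (fun p _ ↦ by simp)
    simp only [Equiv.neg_apply, mem_Icc]
    omega
  rw [sum_neg_distrib] at hodd
  linarith

lemma dirichletKernel_mul_cos (g : ℕ) (m : ℤ) (θ : ℝ) :
    dirichletKernel g θ * cos (m * θ) = ∑ p ∈ Icc (-g : ℤ) g, cos ((m + p : ℤ) * θ) := by
  simp only [Int.cast_add, add_mul, cos_add, sum_sub_distrib, ← mul_sum,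
    sum_Icc_neg_sin_eq_zero, dirichletKernel]
  ring

/-- The separating functional: summation over the vertices of the regular `N`-gon against the
Dirichlet kernel of order `g`. -/
noncomputable def dirichletFunctional (N g : ℕ) : (ℝ → ℝ) →ₗ[ℝ] ℝ where
  toFun F := ∑ j ∈ Icc 1 N, dirichletKernel g (vertexAngle N j) * F (vertexAngle N j)
  map_add' F G := by simp only [Pi.add_apply, mul_add, sum_add_distrib]
  map_smul' c F := by
    simp only [Pi.smul_apply, smul_eq_mul, mul_left_comm, mul_sum, RingHom.id_apply]

lemma dirichletFunctional_apply (N g : ℕ) (F : ℝ → ℝ) :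
    dirichletFunctional N g F =
      ∑ j ∈ Icc 1 N, dirichletKernel g (vertexAngle N j) * F (vertexAngle N j) :=
  rfl

lemma dirichletFunctional_congr {N g : ℕ} {F G : ℝ → ℝ}
    (h : ∀ j ∈ Icc 1 N, F (vertexAngle N j) = G (vertexAngle N j)) :
    dirichletFunctional N g F = dirichletFunctional N g G :=
  sum_congr rfl fun j hj ↦ congrArg _ (h j hj)

lemma dirichletFunctional_sin (N g : ℕ) (m : ℤ) :
    dirichletFunctional N g (fun θ ↦ sin (m * θ)) = 0 := by
  have hreflect := sum_vertexAngle_two_pi_sub N fun θ ↦ dirichletKernel g θ * sin (m * θ)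
  simp only [dirichletKernel_two_pi_sub, mul_sub, sin_int_mul_two_pi_sub, mul_neg,
    sum_neg_distrib] at hreflect
  rw [dirichletFunctional_apply]
  linarith

lemma dirichletFunctional_cos {N g m : ℕ} (hg : g < N) (hm : m ≤ N) :
    dirichletFunctional N g (fun θ ↦ cos (m * θ)) =
      N * ((if m ≤ g then 1 else 0) - if N ≤ m + g then 1 else 0) := by
  have hshift (p : ℤ) (hp : p ∈ Icc (-g : ℤ) g) :
      ∑ j ∈ Icc 1 N, cos (((m : ℤ) + p : ℤ) * vertexAngle N j) =
        N * ((if p = -m then 1 else 0) - if p = N - m then 1 else 0) := by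
    obtain ⟨hpl, hpr⟩ := mem_Icc.mp hp
    rw [sum_cos_vertexAngle (by omega) (by omega)]
    congr 2 <;> exact if_congr (by omega) rfl rfl
  calc dirichletFunctional N g (fun θ ↦ cos (m * θ))
    _ = ∑ p ∈ Icc (-g : ℤ) g, ∑ j ∈ Icc 1 N, cos (((m : ℤ) + p : ℤ) * vertexAngle N j) := by
      rw [sum_comm, dirichletFunctional_apply]
      exact sum_congr rfl fun j _ ↦ dirichletKernel_mul_cos g m _
    _ = N * ((if (-m : ℤ) ∈ Icc (-g : ℤ) g then 1 else 0) -
          if (N - m : ℤ) ∈ Icc (-g : ℤ) g then 1 else 0) := by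
      rw [sum_congr rfl hshift, ← mul_sum, sum_sub_distrib, sum_ite_eq', sum_ite_eq']
    _ = _ := by
      simp only [mem_Icc]
      congr 2 <;> exact if_congr (by omega) rfl rfl

lemma dirichletFunctional_facet_neg {N g : ℕ} (hg : 1 ≤ g) (hgN : g + 1 < N) :
    dirichletFunctional N g (fun θ ↦ cos (π / N) - cos θ) < 0 := by
  have hN : (1 : ℝ) < N := by exact_mod_cast (by omega : 1 < N)
  have hone : dirichletFunctional N g 1 = N := by
    have h := dirichletFunctional_cos (m := 0) (show g < N by omega) (by omega)
    simpa [show ¬ N ≤ g by omega, Pi.one_def] using h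
  have hcos : dirichletFunctional N g cos = N := by
    have h := dirichletFunctional_cos (m := 1) (show g < N by omega) (by omega)
    simpa [hg, show ¬ N ≤ 1 + g by omega] using h
  have hlt : cos (π / N) < 1 := by
    rw [← cos_zero]
    exact cos_lt_cos_of_nonneg_of_le_pi le_rfl (div_le_self pi_pos.le hN.le) (by positivity)
  have hfacet : (fun θ ↦ cos (π / N) - cos θ) = cos (π / N) • (1 : ℝ → ℝ) - cos := by
    ext θ
    simp
  rw [hfacet, map_sub, map_smul, hone, hcos, smul_eq_mul]
  nlinarith

/-! ### Nonnegativity on squares -/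

/-- The trigonometric polynomial with frequencies in `K`, cosine coefficients `a` and sine
coefficients `b`. -/
noncomputable def trigPoly (K : Finset ℕ) (a b : ℕ → ℝ) (θ : ℝ) : ℝ :=
  ∑ k ∈ K, (a k * cos (k * θ) + b k * sin (k * θ))

lemma two_mul_trig_mul_trig (a b c d x y : ℝ) :
    2 * ((a * cos x + b * sin x) * (c * cos y + d * sin y)) =
      (a * c + b * d) * cos (x - y) + (a * c - b * d) * cos (x + y) +
        (b * c - a * d) * sin (x - y) + (b * c + a * d) * sin (x + y) := by
  rw [cos_sub, cos_add, sin_sub, sin_add]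
  ring

lemma two_mul_dirichletFunctional_trigPoly_sq (N g : ℕ) (K : Finset ℕ) (a b : ℕ → ℝ) :
    2 * dirichletFunctional N g (fun θ ↦ trigPoly K a b θ ^ 2) =
      ∑ k ∈ K, ∑ l ∈ K,
        ((a k * a l + b k * b l) * dirichletFunctional N g (fun θ ↦ cos ((k - l : ℤ) * θ)) +
          (a k * a l - b k * b l) * dirichletFunctional N g (fun θ ↦ cos ((k + l : ℤ) * θ))) := by
  have hexpand : (2 : ℝ) • (fun θ ↦ trigPoly K a b θ ^ 2) =
      ∑ k ∈ K, ∑ l ∈ K,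
        ((a k * a l + b k * b l) • (fun θ ↦ cos ((k - l : ℤ) * θ)) +
          (a k * a l - b k * b l) • (fun θ ↦ cos ((k + l : ℤ) * θ)) +
          (b k * a l - a k * b l) • (fun θ ↦ sin ((k - l : ℤ) * θ)) +
          (b k * a l + a k * b l) • (fun θ ↦ sin ((k + l : ℤ) * θ))) := by
    ext θ
    simp only [Pi.smul_apply, Pi.add_apply, Finset.sum_apply, smul_eq_mul, trigPoly, sq,
      sum_mul_sum]
    simp only [mul_sum, two_mul_trig_mul_trig, Int.cast_sub, Int.cast_add, Int.cast_natCast,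
      sub_mul (_ : ℝ) _ θ, add_mul (_ : ℝ) _ θ]
  rw [← smul_eq_mul, ← map_smul, hexpand]
  simp only [map_sum, map_add, map_smul, smul_eq_mul, dirichletFunctional_sin, mul_zero, add_zero]

/-- The points to be clustered: the frequencies in `K`, and the end points `0` and `N / 2`, because
`k + l` and `N - (k + l)` are the sums of the distances of `k` and `l` to these. -/
noncomputable def frequencyPoints (N : ℕ) (K : Finset ℕ) : Finset ℝ :=
  {0, (N / 2 : ℝ)} ∪ K.image (↑)

lemma zero_mem_frequencyPoints (N : ℕ) (K : Finset ℕ) : 0 ∈ frequencyPoints N K := by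
  simp [frequencyPoints]

lemma half_mem_frequencyPoints (N : ℕ) (K : Finset ℕ) : (N / 2 : ℝ) ∈ frequencyPoints N K := by
  simp [frequencyPoints]

lemma cast_mem_frequencyPoints (N : ℕ) {K : Finset ℕ} {k : ℕ} (hk : k ∈ K) :
    (k : ℝ) ∈ frequencyPoints N K := by
  simp [frequencyPoints, hk]

lemma card_frequencyPoints_le (N : ℕ) (K : Finset ℕ) : #(frequencyPoints N K) ≤ #K + 2 := by
  rw [add_comm]
  exact (card_union_le _ _).trans (add_le_add card_le_two card_image_le)

section Square

variable {κ : Type*} {N : ℕ} {K : Finset ℕ} {f : ℝ → κ} {γ : ℝ} {k l : ℕ}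

lemma two_mul_floor_two_mul_lt (hγ : 0 ≤ γ) (hγN : 2 * γ < N / 2) : 2 * ⌊2 * γ⌋₊ < N := by
  have hfloor := Nat.floor_le (show 0 ≤ 2 * γ by positivity)
  exact_mod_cast (by linarith : (2 * ⌊2 * γ⌋₊ : ℝ) < N)

lemma dirichletFunctional_cos_sub [DecidableEq κ] (hK : K ⊆ range (N / 2 + 1)) (hγ : 0 ≤ γ)
    (hγN : 2 * γ < N / 2) (hf : IsSeparatedClustering (frequencyPoints N K) f γ)
    (hk : k ∈ K) (hl : l ∈ K) :
    dirichletFunctional N ⌊2 * γ⌋₊ (fun θ ↦ cos ((k - l : ℤ) * θ)) =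
      if f k = f l then (N : ℝ) else 0 := by
  have hkN := mem_range.mp (hK hk)
  have hlN := mem_range.mp (hK hl)
  have hgN := two_mul_floor_two_mul_lt hγ hγN
  have hnear : (k - l : ℤ).natAbs ≤ ⌊2 * γ⌋₊ ↔ f k = f l := by
    rw [Nat.le_floor_iff (by positivity), ← hf.dist_le_two_mul_iff hγ
      (cast_mem_frequencyPoints N hk) (cast_mem_frequencyPoints N hl), Nat.cast_natAbs, dist_eq]
    push_cast
    rfl
  have habs (θ : ℝ) : cos ((k - l : ℤ) * θ) = cos ((k - l : ℤ).natAbs * θ) := by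
    rw [← cos_abs, abs_mul, ← cos_abs (_ * θ), abs_mul, Nat.cast_natAbs, Int.cast_abs, abs_abs]
  have hfar : ¬ N ≤ (k - l : ℤ).natAbs + ⌊2 * γ⌋₊ := by omega
  simp only [habs]
  rw [dirichletFunctional_cos (by omega) (by omega), if_congr hnear rfl rfl,
    if_neg hfar, sub_zero, mul_ite, mul_one, mul_zero]

lemma dirichletFunctional_cos_add [DecidableEq κ] (hK : K ⊆ range (N / 2 + 1)) (hγ : 0 ≤ γ)
    (hγN : 2 * γ < N / 2) (hf : IsSeparatedClustering (frequencyPoints N K) f γ)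
    (hk : k ∈ K) (hl : l ∈ K) :
    dirichletFunctional N ⌊2 * γ⌋₊ (fun θ ↦ cos ((k + l : ℤ) * θ)) =
      N * ((if f k = f 0 ∧ f l = f 0 then 1 else 0) -
        if f k = f (N / 2) ∧ f l = f (N / 2) then 1 else 0) := by
  have hmem {m : ℕ} (hm : m ∈ K) := cast_mem_frequencyPoints N hm
  have hle {m : ℕ} (hm : m ∈ K) : (m : ℝ) ≤ N / 2 := by
    have h := mem_range.mp (hK hm)
    have : (2 * m : ℝ) ≤ N := by exact_mod_cast (by omega : 2 * m ≤ N)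
    linarith
  have hgN : ⌊2 * γ⌋₊ < N := by linarith [two_mul_floor_two_mul_lt hγ hγN]
  have hsum : k + l ≤ N := by exact_mod_cast (by linarith [hle hk, hle hl] : (k + l : ℝ) ≤ N)
  have hzero : k + l ≤ ⌊2 * γ⌋₊ ↔ f k = f 0 ∧ f l = f 0 := by
    rw [Nat.le_floor_iff (by positivity), ← hf.dist_add_dist_le_two_mul_iff hγ (hmem hk) (hmem hl)
      (zero_mem_frequencyPoints N K)]
    simp
  have hhalf : N ≤ k + l + ⌊2 * γ⌋₊ ↔ f k = f (N / 2) ∧ f l = f (N / 2) := by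
    rw [← hf.dist_add_dist_le_two_mul_iff hγ (hmem hk) (hmem hl) (half_mem_frequencyPoints N K),
      dist_comm, dist_comm (l : ℝ), dist_eq, dist_eq, abs_of_nonneg (sub_nonneg.mpr (hle hk)),
      abs_of_nonneg (sub_nonneg.mpr (hle hl)), ← Nat.sub_le_iff_le_add',
      Nat.le_floor_iff (by positivity), Nat.cast_sub hsum]
    push_cast
    ring_nf
  have h := dirichletFunctional_cos hgN hsum
  rw [if_congr hzero rfl rfl, if_congr hhalf rfl rfl] at h
  exact_mod_cast h

lemma abs_sum_dirichletFunctional_cos_add_le (hK : K ⊆ range (N / 2 + 1)) (hγ : 0 ≤ γ)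
    (hγN : 2 * γ < N / 2) (hf : IsSeparatedClustering (frequencyPoints N K) f γ) (x : ℕ → ℝ) :
    |∑ k ∈ K, ∑ l ∈ K,
        x k * x l * dirichletFunctional N ⌊2 * γ⌋₊ (fun θ ↦ cos ((k + l : ℤ) * θ))| ≤
      ∑ k ∈ K, ∑ l ∈ K,
        x k * x l * dirichletFunctional N ⌊2 * γ⌋₊ (fun θ ↦ cos ((k - l : ℤ) * θ)) := by
  classical
  have hsub : ∑ k ∈ K, ∑ l ∈ K,
        x k * x l * dirichletFunctional N ⌊2 * γ⌋₊ (fun θ ↦ cos ((k - l : ℤ) * θ)) =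
      N * ∑ k ∈ K, ∑ l ∈ K, if f k = f l then x k * x l else 0 := by
    simp only [mul_sum]
    refine sum_congr rfl fun k hk ↦ sum_congr rfl fun l hl ↦ ?_
    rw [dirichletFunctional_cos_sub hK hγ hγN hf hk hl]
    split_ifs <;> ring
  have hadd : ∑ k ∈ K, ∑ l ∈ K,
        x k * x l * dirichletFunctional N ⌊2 * γ⌋₊ (fun θ ↦ cos ((k + l : ℤ) * θ)) =
      N * ((∑ k ∈ K with f (k : ℕ) = f 0, x k) ^ 2 -
        (∑ k ∈ K with f (k : ℕ) = f (N / 2), x k) ^ 2) := by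
    simp only [sq, sum_filter, sum_mul_sum]
    simp only [← sum_sub_distrib, mul_sum]
    refine sum_congr rfl fun k hk ↦ sum_congr rfl fun l hl ↦ ?_
    rw [dirichletFunctional_cos_add hK hγ hγN hf hk hl]
    simp only [ite_and]
    split_ifs <;> ring
  have hcluster (c : κ) := sq_sum_fiber_le_sum_sum_ite K (fun k : ℕ ↦ f k) c x
  rw [hsub, hadd, abs_mul, Nat.abs_cast]
  gcongr
  exact abs_sub_le_of_nonneg_of_le (sq_nonneg _) (hcluster _) (sq_nonneg _) (hcluster _)

lemma dirichletFunctional_trigPoly_sq_nonneg (hK : K ⊆ range (N / 2 + 1)) (hγ : 0 ≤ γ)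
    (hγN : 2 * γ < N / 2) (hf : IsSeparatedClustering (frequencyPoints N K) f γ) (a b : ℕ → ℝ) :
    0 ≤ dirichletFunctional N ⌊2 * γ⌋₊ (fun θ ↦ trigPoly K a b θ ^ 2) := by
  have hsq := two_mul_dirichletFunctional_trigPoly_sq N ⌊2 * γ⌋₊ K a b
  simp only [add_mul _ _ (dirichletFunctional _ _ _), sub_mul _ _ (dirichletFunctional _ _ _),
    sum_add_distrib, sum_sub_distrib] at hsq
  have ha := neg_le_of_abs_le (abs_sum_dirichletFunctional_cos_add_le hK hγ hγN hf a)
  have hb := le_of_abs_le (abs_sum_dirichletFunctional_cos_add_le hK hγ hγN hf b)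
  linarith

end Square

lemma exists_isSeparatedClustering_frequencyPoints {N : ℕ} {K : Finset ℕ} (hN : 2 * 4 ^ #K < N) :
    ∃ (f : ℝ → ℝ) (γ : ℝ), 1 / 2 ≤ γ ∧ 2 * γ < N / 2 ∧
      IsSeparatedClustering (frequencyPoints N K) f γ := by
  obtain ⟨f, γ, hγ, hγK, hf⟩ := exists_isSeparatedClustering (frequencyPoints N K)
    (card_frequencyPoints_le N K) (show (0 : ℝ) ≤ 1 / 2 by norm_num)
  have hzero := zero_mem_frequencyPoints N K
  have hhalf := half_mem_frequencyPoints N K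
  have hdist : dist (N / 2 : ℝ) 0 = N / 2 := by simp
  have hne : f (N / 2) ≠ f 0 := by
    intro h
    have hdiam := hf.dist_le _ hhalf _ hzero h
    have hN' : (2 * 4 ^ #K : ℝ) < N := by exact_mod_cast hN
    linarith
  exact ⟨f, γ, hγ, (hf.lt_dist _ hhalf _ hzero hne).trans_eq hdist, hf⟩

theorem real_sos_frequencies_lb_general {ι : Type*} (s : Finset ι) {N : ℕ} {K : Finset ℕ}
    (hK : K ⊆ range (N / 2 + 1)) (a b : ι → ℕ → ℝ)
    (hcert : ∀ j ∈ Icc 1 N, cos (π / N) - cos (vertexAngle N j) =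
      ∑ i ∈ s, trigPoly K (a i) (b i) (vertexAngle N j) ^ 2) :
    N ≤ 2 * 4 ^ #K := by
  by_contra! hN
  obtain ⟨f, γ, hγ, hγN, hf⟩ := exists_isSeparatedClustering_frequencyPoints hN
  have hγ0 : 0 ≤ γ := by linarith
  have hg : 1 ≤ ⌊2 * γ⌋₊ := Nat.le_floor (by push_cast; linarith)
  have hgN := two_mul_floor_two_mul_lt hγ0 hγN
  have hneg := dirichletFunctional_facet_neg hg (by omega : ⌊2 * γ⌋₊ + 1 < N)
  have hnonneg := sum_nonneg fun i (_ : i ∈ s) ↦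
    dirichletFunctional_trigPoly_sq_nonneg hK hγ0 hγN hf (a i) (b i)
  rw [← map_sum] at hnonneg
  refine hneg.not_ge (hnonneg.trans_eq (dirichletFunctional_congr fun j hj ↦ ?_))
  rw [Finset.sum_apply, hcert j hj]

lemma log_half_div_two_le_of_le_two_mul_four_pow {x : ℝ} {n : ℕ} (hx : 0 < x)
    (h : x ≤ 2 * 4 ^ n) : log (x / 2) / 2 ≤ n := by
  have hlog4 : log 4 ≤ 2 := by
    rw [show (4 : ℝ) = 2 ^ 2 by norm_num, log_pow]
    push_cast
    linarith [log_two_lt_d9]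
  have hlog : log (x / 2) ≤ n * 2 :=
    calc log (x / 2) ≤ log (4 ^ n) := log_le_log (by positivity) (by linarith)
      _ = n * log 4 := log_pow _ _
      _ ≤ n * 2 := by gcongr
  linarith

/-- Any real sum-of-squares certificate for the facet `cos(π/N) − x` of the regular
`N`-gon using functions with frequencies in `K ⊆ {0, …, ⌊N/2⌋}` requires
`|K| ≥ ln(N/2)/2`. -/
theorem real_sos_frequencies_lb (N : ℕ) (hN : 3 ≤ N) (K : Finset ℕ)
    (hK : K ⊆ Finset.range (N / 2 + 1))
    (m : ℕ) (a b : Fin m → ℕ → ℝ)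
    (hcert : ∀ j ∈ Finset.Icc (1:ℕ) N,
      Real.cos (π / N) - Real.cos ((2 * (j : ℝ) - 1) * π / N) =
        ∑ i, (∑ k ∈ K,
          (a i k * Real.cos (k * ((2 * (j : ℝ) - 1) * π / N)) +
           b i k * Real.sin (k * ((2 * (j : ℝ) - 1) * π / N)))) ^ 2) :
    Real.log (N / 2) / 2 ≤ (K.card : ℝ) := by
  have hle : N ≤ 2 * 4 ^ #K := real_sos_frequencies_lb_general univ hK a b hcert
  exact log_half_div_two_le_of_le_two_mul_four_pow (by positivity) (by exact_mod_cast hle)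
end

section
/- Let N ≥ 3 and d ≥ 1 be integers, and suppose N = p^t for a prime p and an integer t ≥ 1. Suppose the regular N-gon admits an LP lift of size d that is equivariant with respect to the rotation group Rot_N ≅ ℤ/Nℤ; i.e., suppose there exist: an affine subspace L of ℝ^d; a linear map π : ℝ^d → ℝ²; and a map Φ : ℤ/Nℤ → Sym(d) into permutations of the d coordinates with Φ(g + g') = Φ(g)∘Φ(g') for all g, g'; such that: (1) conv(𝒳_N) = π({y ∈ L : y ≥ 0 componentwise}); (2) Φ(g)·y ∈ L for all g ∈ ℤ/Nℤ and all y ∈ L, where Φ(g)·y denotes permuting the coordinates of y by Φ(g); and (3) π(Φ(g)·y) = R_g · π(y) for all g ∈ ℤ/Nℤ and all componentwise-nonnegative y ∈ L, where R_g is the rotation of ℝ² by angle 2πg/N. Then d ≥ N. -/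
open Real Finset

/-!
If `N = p ^ t` and `Φ : ℤ/Nℤ → Sym(d)` is injective, then `Φ 1` has order `p ^ t`, and since its
cycle lengths are powers of `p`, one of the cycles has length `p ^ t`; hence `N ≤ d`. Injectivity
comes from a single point `y` of the lift over a nonzero point of the polygon: if `Φ g = 1`, then
`g` fixes `y`, so the rotation `R_g` fixes a nonzero vector, which forces `g = 0`.
-/

section PrimePowerOrder

variable {α : Type*}

theorem exists_minimalPeriod_eq_orderOf_of_isPrimePow {σ : Equiv.Perm α}
    (hσ : IsPrimePow (orderOf σ)) : ∃ x, Function.minimalPeriod σ x = orderOf σ := by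
  obtain ⟨p, t, hp, ht, horder⟩ := (isPrimePow_nat_iff _).1 hσ
  have : Fact p.Prime := ⟨hp⟩
  obtain ⟨k, rfl⟩ := Nat.exists_eq_succ_of_ne_zero ht.ne'
  have hpow_ne_one : σ ^ p ^ k ≠ 1 :=
    pow_ne_one_of_lt_orderOf (pow_ne_zero k hp.ne_zero)
      (horder ▸ Nat.pow_lt_pow_succ hp.one_lt)
  obtain ⟨x, hx⟩ : ∃ x, (σ ^ p ^ k) x ≠ x := by
    simpa [Equiv.ext_iff] using hpow_ne_one
  refine ⟨x, horder ▸ Function.minimalPeriod_eq_prime_pow ?_ ?_⟩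
  · rwa [Function.IsPeriodicPt, Function.IsFixedPt, Equiv.Perm.iterate_eq_pow]
  · rw [Function.IsPeriodicPt, Function.IsFixedPt, Equiv.Perm.iterate_eq_pow, horder,
      pow_orderOf_eq_one, Equiv.Perm.one_apply]

variable [Finite α]

theorem orderOf_perm_le_card_of_isPrimePow {σ : Equiv.Perm α} (hσ : IsPrimePow (orderOf σ)) :
    orderOf σ ≤ Nat.card α := by
  have := Fintype.ofFinite α
  obtain ⟨x, hx⟩ := exists_minimalPeriod_eq_orderOf_of_isPrimePow hσ
  rw [← hx, Nat.card_eq_fintype_card]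
  exact Function.minimalPeriod_le_card

theorem card_le_card_of_injective_perm_of_isPrimePow {G : Type*} [Group G] [IsCyclic G]
    (hG : IsPrimePow (Nat.card G)) {φ : G →* Equiv.Perm α} (hφ : Function.Injective φ) :
    Nat.card G ≤ Nat.card α := by
  obtain ⟨g, hg⟩ := IsCyclic.exists_ofOrder_eq_natCard (α := G)
  have horder : orderOf (φ g) = Nat.card G := (orderOf_injective φ hφ g).trans hg
  rw [← horder] at hG ⊢
  exact orderOf_perm_le_card_of_isPrimePow hG

end PrimePowerOrder

/-- The counterclockwise rotation of the plane about the origin by the angle `θ`, in the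
coordinates of `ℝ × ℝ`. -/
noncomputable def rotate (θ : ℝ) (v : ℝ × ℝ) : ℝ × ℝ :=
  (cos θ * v.1 - sin θ * v.2, sin θ * v.1 + cos θ * v.2)

theorem cos_eq_one_of_rotate_eq_self {θ : ℝ} {v : ℝ × ℝ} (hv : v ≠ 0) (h : rotate θ v = v) :
    cos θ = 1 := by
  obtain ⟨a, b⟩ := v
  obtain ⟨h₁, h₂⟩ : cos θ * a - sin θ * b = a ∧ sin θ * a + cos θ * b = b := by
    simpa only [rotate, Prod.mk.injEq] using h
  have hnorm : a ^ 2 + b ^ 2 ≠ 0 := fun h0 => hv <| by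
    rw [Prod.mk_eq_zero]
    constructor <;> nlinarith
  -- The inner product of `rotate θ v = v` with `v`.
  have hinner : cos θ * (a ^ 2 + b ^ 2) = 1 * (a ^ 2 + b ^ 2) := by
    linear_combination a * h₁ + b * h₂
  exact mul_right_cancel₀ hnorm hinner

theorem eq_zero_of_cos_two_pi_mul_val_div_eq_one {N : ℕ} [NeZero N] {g : ZMod N}
    (h : cos (2 * π * (g.val : ℝ) / N) = 1) : g = 0 := by
  have hN : (0 : ℝ) < N := Nat.cast_pos.2 (NeZero.pos N)
  have hval : (g.val : ℝ) < N := Nat.cast_lt.2 g.val_lt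
  have hnonneg : 0 ≤ 2 * π * (g.val : ℝ) / N := by positivity
  have hlt : 2 * π * (g.val : ℝ) / N < 2 * π := by
    rw [div_lt_iff₀ hN]
    gcongr
  have hangle : 2 * π * (g.val : ℝ) / N = 0 :=
    (cos_eq_one_iff_of_lt_of_lt (by linarith [pi_pos]) hlt).1 h
  have hval_zero : (g.val : ℝ) = 0 := by
    rw [div_eq_zero_iff, mul_eq_zero] at hangle
    exact (hangle.resolve_right hN.ne').resolve_left two_pi_pos.ne'
  exact (ZMod.val_eq_zero g).1 (Nat.cast_eq_zero.1 hval_zero)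

theorem cos_sin_ne_zero (θ : ℝ) : (cos θ, sin θ) ≠ (0 : ℝ × ℝ) := fun h => by
  obtain ⟨hcos, hsin⟩ := Prod.mk_eq_zero.1 h
  simpa [hcos, hsin] using sin_sq_add_cos_sq θ

theorem exists_mem_convexHull_regularPolygon_ne_zero {N : ℕ} (hN : 1 ≤ N) :
    ∃ q ∈ convexHull ℝ {q : ℝ × ℝ | ∃ i ∈ Finset.Icc (1 : ℕ) N,
      q = (cos ((2 * (i : ℝ) - 1) * π / N), sin ((2 * (i : ℝ) - 1) * π / N))}, q ≠ 0 :=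
  ⟨_, subset_convexHull ℝ _ ⟨1, Finset.left_mem_Icc.2 hN, rfl⟩, cos_sin_ne_zero _⟩

theorem equivariant_lp_lift_lb_general {ι α : Type*} [Finite ι] {N : ℕ} (hN : IsPrimePow N)
    {Φ : ZMod N → Equiv.Perm ι} (hΦ : ∀ g g' : ZMod N, Φ (g + g') = Φ g * Φ g')
    {f : (ι → α) → ℝ × ℝ} {y : ι → α} (hy : f y ≠ 0)
    (hequiv : ∀ g : ZMod N,
      f (fun i => y ((Φ g)⁻¹ i)) = rotate (2 * π * (g.val : ℝ) / N) (f y)) :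
    N ≤ Nat.card ι := by
  have : NeZero N := ⟨hN.ne_zero⟩
  let φ : Multiplicative (ZMod N) →* Equiv.Perm ι :=
    MonoidHom.mk' (fun g => Φ g.toAdd) fun g g' => hΦ g.toAdd g'.toAdd
  have hker (g : ZMod N) (hg : Φ g = 1) : g = 0 := by
    have hfixed : rotate (2 * π * (g.val : ℝ) / N) (f y) = f y := by
      rw [← hequiv, hg]
      rfl
    exact eq_zero_of_cos_two_pi_mul_val_div_eq_one (cos_eq_one_of_rotate_eq_self hy hfixed)
  have hφ : Function.Injective φ := (injective_iff_map_eq_one φ).2 hker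
  have hcard : Nat.card (Multiplicative (ZMod N)) = N := Nat.card_zmod N
  rw [← hcard] at hN ⊢
  exact card_le_card_of_injective_perm_of_isPrimePow hN hφ

/-- When `N` is a prime power, any LP lift of the regular `N`-gon that is equivariant
with respect to the rotation group `Rot_N ≅ ℤ/Nℤ` has size at least `N`. -/
theorem equivariant_lp_lift_lb (N d : ℕ) (hN : 3 ≤ N) (hd : 1 ≤ d)
    (p t : ℕ) (hp : p.Prime) (ht : 1 ≤ t) (hNpt : N = p ^ t)
    (L : AffineSubspace ℝ (Fin d → ℝ))
    (π' : (Fin d → ℝ) →ₗ[ℝ] ℝ × ℝ)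
    (Φ : ZMod N → Equiv.Perm (Fin d))
    (hΦ : ∀ g g' : ZMod N, Φ (g + g') = Φ g * Φ g')
    (hlift : convexHull ℝ
        {q : ℝ × ℝ | ∃ i ∈ Finset.Icc (1:ℕ) N,
          q = (Real.cos ((2 * (i : ℝ) - 1) * π / N),
               Real.sin ((2 * (i : ℝ) - 1) * π / N))} =
      π' '' {y | y ∈ L ∧ ∀ i, 0 ≤ y i})
    (hinv : ∀ g : ZMod N, ∀ y ∈ L, (fun i => y ((Φ g)⁻¹ i)) ∈ L)
    (hequiv : ∀ g : ZMod N, ∀ y ∈ L, (∀ i, 0 ≤ y i) →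
      π' (fun i => y ((Φ g)⁻¹ i)) =
        (Real.cos (2 * π * (g.val : ℝ) / N) * (π' y).1 -
            Real.sin (2 * π * (g.val : ℝ) / N) * (π' y).2,
         Real.sin (2 * π * (g.val : ℝ) / N) * (π' y).1 +
            Real.cos (2 * π * (g.val : ℝ) / N) * (π' y).2)) :
    N ≤ d := by
  obtain ⟨_, hq, hq0⟩ := exists_mem_convexHull_regularPolygon_ne_zero (by omega : 1 ≤ N)
  obtain ⟨y, ⟨hyL, hy⟩, rfl⟩ := hlift ▸ hq
  have hN_primePow : IsPrimePow N := hNpt ▸ hp.isPrimePow.pow (by omega)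
  simpa using equivariant_lp_lift_lb_general hN_primePow hΦ hq0 fun g => hequiv g y hyL hy
end
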